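/- arXiv:2509.18296 — 2 statements merged into one kernel-verified Lean document; each statement's English description precedes it below -/
import Mathlib

section
/- Let G ⊆ ℂⁿ be a bounded complete n-circled domain and let f : ℂⁿ → ℂ be continuous on closure(G) and holomorphic on G. Then for every ε > 0 there exists a polynomial p ∈ MvPolynomial (Fin n) ℂ such that sup_{z ∈ closure(G)} |f(z) − p(z)| ≤ ε, where p(z) denotes the evaluation of p at z. -/
/-!
If `c • closure G ⊆ G` whenever `‖c‖ < 1`, then `f` is the uniform limit on the compact set
`closure G` of its dilates `z ↦ f (r • z)` as `r` increases to `1`. On each complex line through `0`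
a dilate is a one-variable holomorphic function on a disc of radius greater than `1`, so Cauchy's
estimates bound the remainder of its Taylor expansion at `0` by a geometric tail, uniformly in
`z ∈ closure G`. The Taylor polynomials along the lines are the restrictions of a single polynomial
because `f` is smooth: by the Schwarz lemma for functions vanishing to second order, the difference
quotients of a holomorphic function converge uniformly, hence the directional derivatives of a
holomorphic function are again holomorphic.
-/

open Filter Metric Set Topology
open scoped ContDiff Nat

theorem eventually_norm_smul_lt {𝕜 E : Type*} [NormedField 𝕜] [SeminormedAddCommGroup E]
    [NormedSpace 𝕜 E] (v : E) {r : ℝ} (hr : 0 < r) : ∀ᶠ t : 𝕜 in 𝓝 0, ‖t • v‖ < r :=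
  (show Continuous fun t : 𝕜 ↦ ‖t • v‖ by fun_prop).tendsto' 0 0 (by simp)
    |>.eventually_lt_const hr

section Holomorphic

variable {E F : Type*} [NormedAddCommGroup E] [NormedSpace ℂ E]
  [NormedAddCommGroup F] [NormedSpace ℂ F]

theorem uniformCauchySeqOn_fderiv_of_ball {ι : Type*} {l : Filter ι} {f : ι → E → F} {c : E}
    {r R : ℝ} (hrR : r < R) (hd : ∀ᶠ i in l, DifferentiableOn ℂ (f i) (ball c R))
    (hf : UniformCauchySeqOn f l (ball c R)) :
    UniformCauchySeqOn (fun i ↦ fderiv ℂ (f i)) l (ball c r) := by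
  intro u hu
  obtain ⟨ε, hε, hεu⟩ := mem_uniformity_dist.1 hu
  have hδ : 0 < (R - r) * ε / 4 := by have := sub_pos.2 hrR; positivity
  filter_upwards [hf _ (dist_mem_uniformity hδ), hd.prod_mk hd] with ⟨i, j⟩ hij ⟨hi, hj⟩ z hz
  have hsub : ball z (R - r) ⊆ ball c R := ball_subset_ball' (by linarith [mem_ball.1 hz])
  have hzR : z ∈ ball c R := hsub (mem_ball_self (sub_pos.2 hrR))
  have hmaps : MapsTo (f i - f j) (ball z (R - r))
      (closedBall ((f i - f j) z) ((R - r) * ε / 2)) := fun w hw ↦ by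
    have hw' : ‖(f i - f j) w‖ < (R - r) * ε / 4 := by simpa [dist_eq_norm] using hij w (hsub hw)
    have hz' : ‖(f i - f j) z‖ < (R - r) * ε / 4 := by simpa [dist_eq_norm] using hij z hzR
    rw [mem_closedBall, dist_eq_norm]
    linarith [norm_sub_le ((f i - f j) w) ((f i - f j) z)]
  have hzn : ball c R ∈ 𝓝 z := isOpen_ball.mem_nhds hzR
  apply hεu
  calc dist (fderiv ℂ (f i) z) (fderiv ℂ (f j) z) = ‖fderiv ℂ (f i - f j) z‖ := by
        rw [dist_eq_norm, fderiv_sub (hi.differentiableAt hzn) (hj.differentiableAt hzn)]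
    _ ≤ (R - r) * ε / 2 / (R - r) :=
        Complex.norm_fderiv_le_div_of_mapsTo_ball ((hi.sub hj).mono hsub) hmaps (sub_pos.2 hrR)
    _ < ε := by rw [mul_div_assoc, mul_div_cancel_left₀ _ (sub_pos.2 hrR).ne']; linarith

theorem differentiableOn_of_tendstoUniformlyOn [CompleteSpace F] {ι : Type*} {l : Filter ι}
    [l.NeBot] {f : ι → E → F} {g : E → F} {U : Set E} (hU : IsOpen U)
    (hd : ∀ᶠ i in l, DifferentiableOn ℂ (f i) U) (hlim : TendstoUniformlyOn f g l U) :
    DifferentiableOn ℂ g U := by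
  intro x hx
  obtain ⟨R, hR, hRU⟩ := isOpen_iff.1 hU x hx
  have hcauchy : UniformCauchySeqOn (fun i ↦ fderiv ℂ (f i)) l (ball x (R / 2)) :=
    uniformCauchySeqOn_fderiv_of_ball (half_lt_self hR) (hd.mono fun i hi ↦ hi.mono hRU)
      (hlim.mono hRU).uniformCauchySeqOn
  have hfderiv : ∀ y ∈ ball x (R / 2), Tendsto (fun i ↦ fderiv ℂ (f i) y) l
      (𝓝 (limUnder l fun i ↦ fderiv ℂ (f i) y)) := fun y hy ↦ (hcauchy.cauchy_map hy).le_nhds_lim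
  have hnhds : ball x (R / 2) ∈ 𝓝 x := ball_mem_nhds x (half_pos hR)
  have hunif := (hcauchy.tendstoUniformlyOn_of_tendsto hfderiv).tendstoUniformlyOnFilter.mono_right
    (le_principal_iff.2 hnhds)
  refine (hasFDerivAt_of_tendstoUniformlyOnFilter (f := f) hunif ?_ ?_).differentiableAt
    |>.differentiableWithinAt
  · filter_upwards [hd.prod_mk (hU.eventually_mem hx)] with ⟨i, y⟩ ⟨hi, hy⟩
    exact (hi.differentiableAt (hU.mem_nhds hy)).hasFDerivAt
  · filter_upwards [hU.mem_nhds hx] with y hy using hlim.tendsto_at hy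

theorem norm_sub_sub_fderiv_le_of_mapsTo_ball {f : E → F} {c z : E} {R M : ℝ}
    (hd : DifferentiableOn ℂ f (ball c R)) (hM : MapsTo f (ball c R) (closedBall (f c) M))
    (hz : z ∈ ball c R) :
    ‖f z - f c - fderiv ℂ f c (z - c)‖ ≤ 2 * M * (‖z - c‖ / R) ^ 2 := by
  have hR : 0 < R := nonempty_ball.1 ⟨z, hz⟩
  let g : E → F := fun w ↦ f w - fderiv ℂ f c (w - c)
  have hg : ∀ w, g w - g c = f w - f c - fderiv ℂ f c (w - c) := fun w ↦ by
    simp [g, sub_right_comm]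
  have hgd : DifferentiableOn ℂ g (ball c R) := hd.sub (by fun_prop)
  have hgM : MapsTo g (ball c R) (closedBall (g c) (2 * M)) := fun w hw ↦ by
    have hlin : ‖fderiv ℂ f c (w - c)‖ ≤ M := by
      have hwR : ‖w - c‖ ≤ R := (mem_ball_iff_norm.1 hw).le
      calc ‖fderiv ℂ f c (w - c)‖ ≤ M / R * R :=
            ContinuousLinearMap.le_of_opNorm_le_of_le _
              (Complex.norm_fderiv_le_div_of_mapsTo_ball hd hM hR) hwR
        _ = M := div_mul_cancel₀ M hR.ne'
    rw [mem_closedBall, dist_eq_norm, hg]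
    linarith [norm_sub_le (f w - f c) (fderiv ℂ f c (w - c)), mem_closedBall_iff_norm.1 (hM hw)]
  have hgo : (g · - g c) =o[𝓝 c] (fun w ↦ ‖w - c‖ ^ 1) := by
    simp only [hg, pow_one]
    exact (hd.differentiableAt (ball_mem_nhds c hR)).hasFDerivAt.isLittleO.norm_right
  simpa only [dist_eq_norm, hg] using
    Complex.dist_le_mul_div_pow_of_mapsTo_ball_of_isLittleO hgd hgM hgo hz

theorem tendstoUniformlyOn_slope_fderiv_apply {f : E → F} {c : E} {r R M : ℝ} (hrR : r < R)
    (hd : DifferentiableOn ℂ f (ball c R)) (hM : ∀ z ∈ ball c R, ‖f z‖ ≤ M) (v : E) :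
    TendstoUniformlyOn (fun (t : ℂ) z ↦ t⁻¹ • (f (z + t • v) - f z)) (fun z ↦ fderiv ℂ f z v)
      (𝓝[≠] 0) (ball c r) := by
  let C : ℝ := 2 * (M + M) * (‖v‖ / (R - r)) ^ 2
  have hR : 0 < R - r := sub_pos.2 hrR
  have hsmall : ∀ᶠ t : ℂ in 𝓝[≠] 0, ‖t • v‖ < R - r :=
    nhdsWithin_le_nhds (eventually_norm_smul_lt v hR)
  have hlim : Tendsto (fun t : ℂ ↦ ‖t‖ * C) (𝓝[≠] 0) (𝓝 0) :=
    tendsto_nhdsWithin_of_tendsto_nhds <|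
      (show Continuous fun t : ℂ ↦ ‖t‖ * C by fun_prop).tendsto' 0 0 (by simp)
  refine tendstoUniformlyOn_iff.2 fun ε hε ↦ ?_
  filter_upwards [hsmall, hlim.eventually_lt_const hε, self_mem_nhdsWithin] with t ht htε ht0 z hz
  have ht0 : t ≠ 0 := ht0
  have hsub : ball z (R - r) ⊆ ball c R := ball_subset_ball' (by linarith [mem_ball.1 hz])
  have hmaps : MapsTo f (ball z (R - r)) (closedBall (f z) (M + M)) := fun w hw ↦ by
    rw [mem_closedBall, dist_eq_norm]
    exact norm_sub_le_of_le (hM w (hsub hw)) (hM z (hsub (mem_ball_self hR)))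
  have hquad : ‖f (z + t • v) - f z - t • fderiv ℂ f z v‖ ≤ ‖t‖ ^ 2 * C := by
    have hschwarz := norm_sub_sub_fderiv_le_of_mapsTo_ball (hd.mono hsub) hmaps
      (show z + t • v ∈ ball z (R - r) by simpa using ht)
    rw [add_sub_cancel_left, map_smul, norm_smul] at hschwarz
    exact hschwarz.trans_eq (by ring)
  calc dist (fderiv ℂ f z v) (t⁻¹ • (f (z + t • v) - f z))
      = ‖t⁻¹ • (f (z + t • v) - f z - t • fderiv ℂ f z v)‖ := by
        rw [smul_sub _ _ (t • _), inv_smul_smul₀ ht0, dist_comm, dist_eq_norm]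
    _ ≤ ‖t‖⁻¹ * (‖t‖ ^ 2 * C) := by rw [norm_smul, norm_inv]; gcongr
    _ = ‖t‖ * C := by rw [← mul_assoc, pow_two, inv_mul_cancel_left₀ (norm_ne_zero_iff.2 ht0)]
    _ < ε := htε

theorem differentiableOn_fderiv_apply [CompleteSpace F] {f : E → F} {U : Set E} (hU : IsOpen U)
    (hf : DifferentiableOn ℂ f U) (v : E) : DifferentiableOn ℂ (fun z ↦ fderiv ℂ f z v) U := by
  intro x hx
  have hbdd : ∀ᶠ z in 𝓝 x, z ∈ U ∧ ‖f z‖ ≤ ‖f x‖ + 1 :=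
    (hU.eventually_mem hx).and <| ((hf.differentiableAt (hU.mem_nhds hx)).continuousAt.norm
      |>.eventually_lt_const (lt_add_one _)).mono fun _ ↦ le_of_lt
  obtain ⟨R, hR, hball⟩ := eventually_nhds_iff_ball.1 hbdd
  have hd : DifferentiableOn ℂ f (ball x R) := hf.mono fun z hz ↦ (hball z hz).1
  have hlim := tendstoUniformlyOn_slope_fderiv_apply (half_lt_self hR) hd
    (fun z hz ↦ (hball z hz).2) v
  have hslope : ∀ᶠ t : ℂ in 𝓝[≠] 0,
      DifferentiableOn ℂ (fun z ↦ t⁻¹ • (f (z + t • v) - f z)) (ball x (R / 2)) := by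
    filter_upwards [nhdsWithin_le_nhds (eventually_norm_smul_lt v (half_pos hR))] with t ht
    have hmaps : MapsTo (fun z ↦ z + t • v) (ball x (R / 2)) (ball x R) := fun z hz ↦ by
      rw [mem_ball_iff_norm, add_sub_right_comm]
      linarith [norm_add_le (z - x) (t • v), mem_ball_iff_norm.1 hz]
    exact ((hd.comp (by fun_prop) hmaps).sub
      (hd.mono (ball_subset_ball (half_le_self hR.le)))).const_smul _
  exact (differentiableOn_of_tendstoUniformlyOn isOpen_ball hslope hlim).differentiableAt
    (ball_mem_nhds x (half_pos hR)) |>.differentiableWithinAt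

theorem contDiffOn_infty_of_differentiableOn [FiniteDimensional ℂ E] [CompleteSpace F] {f : E → F}
    {U : Set E} (hU : IsOpen U) (hf : DifferentiableOn ℂ f U) : ContDiffOn ℂ ∞ f U := by
  refine contDiffOn_infty.2 fun k ↦ ?_
  induction k generalizing f with
  | zero => exact contDiffOn_zero.2 hf.continuousOn
  | succ k ih =>
    rw [Nat.cast_succ, contDiffOn_succ_iff_fderiv_apply hU.uniqueDiffOn]
    refine ⟨hf, fun h ↦ absurd h (by simp), fun v ↦ ?_⟩
    exact (ih (differentiableOn_fderiv_apply hU hf v)).congr fun z hz ↦ by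
      rw [fderivWithin_of_isOpen hU hz]

end Holomorphic

section OneVariable

variable {F : Type*} [NormedAddCommGroup F] [NormedSpace ℂ F] [CompleteSpace F]

theorem norm_iteratedDeriv_le_of_forall_mem_ball_norm_le {f : ℂ → F} {c : ℂ} {R M : ℝ}
    (hR : 0 < R) (hd : DifferentiableOn ℂ f (ball c R)) (hM : ∀ z ∈ ball c R, ‖f z‖ ≤ M) (k : ℕ) :
    ‖iteratedDeriv k f c‖ ≤ k ! * M / R ^ k := by
  have hlim : Tendsto (fun ρ : ℝ ↦ k ! * M / ρ ^ k) (𝓝[<] R) (𝓝 (k ! * M / R ^ k)) :=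
    tendsto_nhdsWithin_of_tendsto_nhds <|
      (continuousAt_const.div (continuousAt_id.pow k) (pow_ne_zero k hR.ne')).tendsto
  refine ge_of_tendsto hlim ?_
  filter_upwards [Ioo_mem_nhdsLT hR] with ρ ⟨hρ, hρR⟩
  exact Complex.norm_iteratedDeriv_le_of_forall_mem_sphere_norm_le k hρ
    (hd.diffContOnCl_ball (closedBall_subset_ball hρR))
    fun z hz ↦ hM z (closedBall_subset_ball hρR (sphere_subset_closedBall hz))

theorem norm_sub_sum_taylor_le_of_forall_mem_ball_norm_le {f : ℂ → F} {c w : ℂ} {R M : ℝ}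
    (hd : DifferentiableOn ℂ f (ball c R)) (hM : ∀ z ∈ ball c R, ‖f z‖ ≤ M) (hw : w ∈ ball c R)
    (N : ℕ) :
    ‖f w - ∑ k ∈ Finset.range N, (k ! : ℂ)⁻¹ • (w - c) ^ k • iteratedDeriv k f c‖ ≤
      M * (‖w - c‖ / R) ^ N / (1 - ‖w - c‖ / R) := by
  have hR : 0 < R := nonempty_ball.1 ⟨w, hw⟩
  have hratio : ‖w - c‖ / R < 1 := (div_lt_one hR).2 (mem_ball_iff_norm.1 hw)
  have hterm : ∀ k : ℕ, ‖(k ! : ℂ)⁻¹ • (w - c) ^ k • iteratedDeriv k f c‖ ≤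
      M * (‖w - c‖ / R) ^ k := fun k ↦ by
    rw [norm_smul, norm_smul, norm_inv, norm_pow, Complex.norm_natCast]
    calc (k ! : ℝ)⁻¹ * (‖w - c‖ ^ k * ‖iteratedDeriv k f c‖)
        ≤ (k ! : ℝ)⁻¹ * (‖w - c‖ ^ k * (k ! * M / R ^ k)) := by
          gcongr
          exact norm_iteratedDeriv_le_of_forall_mem_ball_norm_le hR hd hM k
      _ = M * (‖w - c‖ / R) ^ k := by rw [div_pow]; field_simp
  rw [norm_sub_rev]
  exact norm_sub_le_of_geometric_bound_of_hasSum hratio hterm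
    (Complex.hasSum_taylorSeries_on_ball hd hw) N

end OneVariable

section TaylorSeries

variable {𝕜 E F : Type*} [NontriviallyNormedField 𝕜] [NormedAddCommGroup E] [NormedSpace 𝕜 E]
  [NormedAddCommGroup F] [NormedSpace 𝕜 F]

theorem iteratedDeriv_comp_add_smul_zero {f : E → F} {x : E} {k : ℕ} (hf : ContDiffAt 𝕜 k f x)
    (v : E) :
    iteratedDeriv k (fun t : 𝕜 ↦ f (x + t • v)) 0 = iteratedFDeriv 𝕜 k f x fun _ ↦ v := by
  let g : 𝕜 →L[𝕜] E := ContinuousLinearMap.toSpanSingleton 𝕜 v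
  have hshift : ContDiffAt 𝕜 k (fun y ↦ f (x + y)) (g 0) :=
    ContDiffAt.comp (g 0) (by simpa [g] using hf) (by fun_prop)
  obtain ⟨s, hs, hgs, hfs⟩ : ∃ s, IsOpen s ∧ g 0 ∈ s ∧ ContDiffOn 𝕜 k (fun y ↦ f (x + y)) s := by
    obtain ⟨u, hu, hfu⟩ := hshift.contDiffOn le_rfl (by simp)
    exact ⟨interior u, isOpen_interior, mem_interior_iff_mem_nhds.2 hu, hfu.mono interior_subset⟩
  have hgs' : IsOpen (g ⁻¹' s) := hs.preimage g.continuous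
  have hcomp := g.iteratedFDerivWithin_comp_right hfs hs.uniqueDiffOn hgs'.uniqueDiffOn hgs le_rfl
  rw [iteratedFDerivWithin_of_isOpen k hgs' hgs, iteratedFDerivWithin_of_isOpen k hs hgs,
    iteratedFDeriv_comp_add_left, map_zero, add_zero] at hcomp
  have hfg : (fun t : 𝕜 ↦ f (x + t • v)) = (fun y ↦ f (x + y)) ∘ g := rfl
  rw [iteratedDeriv_eq_iteratedFDeriv, hfg, hcomp]
  simp [g]

variable (𝕜) in
/-- The Taylor series of `f` at `x`, as a formal multilinear series in the increment. In contrast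
to `ftaylorSeries`, its terms are divided by the factorials, so that it can be summed to `f`. -/
noncomputable def taylorSeries (f : E → F) (x : E) : FormalMultilinearSeries 𝕜 E F :=
  fun k ↦ (k ! : 𝕜)⁻¹ • iteratedFDeriv 𝕜 k f x

theorem taylorSeries_partialSum_smul {f : E → F} {x : E} (hf : ContDiffAt 𝕜 ∞ f x) (v : E) (t : 𝕜)
    (N : ℕ) :
    (taylorSeries 𝕜 f x).partialSum N (t • v) = ∑ k ∈ Finset.range N,
      (k ! : 𝕜)⁻¹ • t ^ k • iteratedDeriv k (fun s : 𝕜 ↦ f (x + s • v)) 0 := by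
  refine Finset.sum_congr rfl fun k _ ↦ ?_
  rw [iteratedDeriv_comp_add_smul_zero (hf.of_le (mod_cast le_top)) v, taylorSeries,
    smul_apply, ContinuousMultilinearMap.map_smul_univ]
  simp

end TaylorSeries

theorem tendstoUniformlyOn_comp_smul_one {E F : Type*} [TopologicalSpace E] [AddCommMonoid E]
    [Module ℝ E] [ContinuousSMul ℝ E] [UniformSpace F] {K : Set E} {f : E → F} (hK : IsCompact K)
    (hstar : StarConvex ℝ 0 K) (hf : ContinuousOn f K) :
    TendstoUniformlyOn (fun (r : ℝ) z ↦ f (r • z)) f (𝓝[≤] 1) K := by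
  intro u hu
  have hcont : ContinuousOn (Function.uncurry fun (r : ℝ) z ↦ f (r • z)) (Icc 0 1 ×ˢ K) :=
    hf.comp (by fun_prop) fun p hp ↦ starConvex_zero_iff.1 hstar hp.2 hp.1.1 hp.1.2
  obtain ⟨s, hs, hsu⟩ := hK.mem_uniformity_of_prod hcont
    (right_mem_Icc.2 zero_le_one) (symm_le_uniformity hu)
  rw [nhdsWithin_Icc_eq_nhdsLE zero_lt_one] at hs
  filter_upwards [hs] with r hr z hz
  simpa using hsu r hr z hz

section Approximation

variable {E F : Type*} [NormedAddCommGroup E] [NormedSpace ℂ E] [FiniteDimensional ℂ E]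
  [NormedAddCommGroup F] [NormedSpace ℂ F] [CompleteSpace F]

theorem norm_sub_taylorSeries_partialSum_le {f : E → F} {U : Set E} {x v : E} {t : ℂ} {M : ℝ}
    (hU : IsOpen U) (hf : DifferentiableOn ℂ f U) (hx : ∀ s : ℂ, ‖s‖ < 1 → x + s • v ∈ U)
    (hM : ∀ s : ℂ, ‖s‖ < 1 → ‖f (x + s • v)‖ ≤ M) (ht : ‖t‖ < 1) (N : ℕ) :
    ‖f (x + t • v) - (taylorSeries ℂ f x).partialSum N (t • v)‖ ≤ M * ‖t‖ ^ N / (1 - ‖t‖) := by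
  have hxU : x ∈ U := by simpa using hx 0 (by simp)
  have hsmooth : ContDiffAt ℂ ∞ f x :=
    (contDiffOn_infty_of_differentiableOn hU hf).contDiffAt (hU.mem_nhds hxU)
  have hline : DifferentiableOn ℂ (fun s : ℂ ↦ f (x + s • v)) (ball 0 1) :=
    hf.comp (by fun_prop) fun s hs ↦ hx s (mem_ball_zero_iff.1 hs)
  rw [taylorSeries_partialSum_smul hsmooth]
  simpa using norm_sub_sum_taylor_le_of_forall_mem_ball_norm_le hline
    (fun s hs ↦ hM s (mem_ball_zero_iff.1 hs)) (mem_ball_zero_iff.2 ht) N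

theorem exists_partialSum_norm_sub_le {G : Set E} (hopen : IsOpen G) (hbdd : Bornology.IsBounded G)
    (hG : ∀ z ∈ closure G, ∀ c : ℂ, ‖c‖ < 1 → c • z ∈ G) {f : E → F}
    (hfc : ContinuousOn f (closure G)) (hfd : DifferentiableOn ℂ f G) {ε : ℝ} (hε : 0 < ε) :
    ∃ (p : FormalMultilinearSeries ℂ E F) (N : ℕ), ∀ z ∈ closure G,
      ‖f z - p.partialSum N z‖ ≤ ε := by
  have : ProperSpace E := FiniteDimensional.proper ℂ E
  have hK : IsCompact (closure G) := hbdd.isCompact_closure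
  have hstar : StarConvex ℝ 0 (closure G) := starConvex_zero_iff.2 fun z hz r hr0 hr1 ↦ by
    rcases hr1.eq_or_lt with rfl | hr1
    · rwa [one_smul]
    · exact subset_closure (hG z hz r (by rwa [Complex.norm_of_nonneg hr0]))
  obtain ⟨M, hM⟩ := hK.exists_bound_of_continuousOn hfc
  obtain ⟨r, hr, hr0, hr1⟩ : ∃ r : ℝ, (∀ z ∈ closure G, dist (f z) (f (r • z)) < ε / 2) ∧
      0 < r ∧ r < 1 := by
    have hdil := (tendstoUniformlyOn_iff.1 (tendstoUniformlyOn_comp_smul_one hK hstar hfc) _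
      (half_pos hε)).filter_mono (nhdsWithin_mono 1 Iio_subset_Iic_self)
    exact (hdil.and (Ioo_mem_nhdsLT zero_lt_one)).exists
  obtain ⟨N, hN⟩ : ∃ N : ℕ, M * r ^ N / (1 - r) < ε / 2 := by
    have hlim : Tendsto (fun N : ℕ ↦ M * r ^ N / (1 - r)) atTop (𝓝 (M * 0 / (1 - r))) :=
      ((tendsto_pow_atTop_nhds_zero_of_lt_one hr0.le hr1).const_mul M).div_const _
    rw [mul_zero, zero_div] at hlim
    exact (hlim.eventually_lt_const (half_pos hε)).exists
  refine ⟨(taylorSeries ℂ f 0).compContinuousLinearMap ((r : ℂ) • ContinuousLinearMap.id ℂ E), N,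
    fun z hz ↦ ?_⟩
  have hdilate : ‖f z - f ((r : ℂ) • z)‖ < ε / 2 := by simpa [dist_eq_norm] using hr z hz
  have hnorm : ‖(r : ℂ)‖ = r := Complex.norm_of_nonneg hr0.le
  have htaylor : ‖f ((r : ℂ) • z) - (taylorSeries ℂ f 0).partialSum N ((r : ℂ) • z)‖ < ε / 2 := by
    have hdisc : ∀ s : ℂ, ‖s‖ < 1 → 0 + s • z ∈ G := by simpa only [zero_add] using hG z hz
    have hremainder := norm_sub_taylorSeries_partialSum_le hopen hfd hdisc
      (fun s hs ↦ hM _ (subset_closure (hdisc s hs))) (hnorm.trans_lt hr1) N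
    rw [zero_add, hnorm] at hremainder
    exact hremainder.trans_lt hN
  calc ‖f z - (taylorSeries ℂ f 0).partialSum N ((r : ℂ) • z)‖
      ≤ ‖f z - f ((r : ℂ) • z)‖ +
          ‖f ((r : ℂ) • z) - (taylorSeries ℂ f 0).partialSum N ((r : ℂ) • z)‖ :=
        norm_sub_le_norm_sub_add_norm_sub _ _ _
    _ ≤ ε := by linarith

end Approximation

section Polynomial

variable {R ι : Type*} [CommSemiring R] [Finite ι]

theorem exists_mvPolynomial_eval_eq_multilinearMap {κ : Type*} [Finite κ]
    (g : MultilinearMap R (fun _ : κ ↦ ι → R) R) :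
    ∃ p : MvPolynomial ι R, ∀ z, MvPolynomial.eval z p = g fun _ ↦ z := by
  classical
  have := Fintype.ofFinite ι
  have := Fintype.ofFinite κ
  refine ⟨∑ r : κ → ι, MvPolynomial.C (g fun i ↦ Pi.single (r i) 1) *
    ∏ i, MvPolynomial.X (r i), fun z ↦ ?_⟩
  calc _ = ∑ r : κ → ι, (g fun i ↦ Pi.single (r i) 1) * ∏ i, z (r i) := by simp
    _ = ∑ r : κ → ι, g fun i ↦ z (r i) • Pi.single (r i) (1 : R) := by
      simp only [MultilinearMap.map_smul_univ, smul_eq_mul, mul_comm]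
    _ = g fun _ ↦ ∑ j, z j • Pi.single j (1 : R) :=
      (g.map_sum fun _ j ↦ z j • Pi.single j (1 : R)).symm
    _ = g fun _ ↦ z := by rw [← pi_eq_sum_univ' z]

theorem exists_mvPolynomial_eval_eq_partialSum [TopologicalSpace R] [IsTopologicalSemiring R]
    (p : FormalMultilinearSeries R (ι → R) R) (N : ℕ) :
    ∃ q : MvPolynomial ι R, ∀ z, MvPolynomial.eval z q = p.partialSum N z := by
  choose q hq using fun k ↦ exists_mvPolynomial_eval_eq_multilinearMap (p k).toMultilinearMap
  refine ⟨∑ k ∈ Finset.range N, q k, fun z ↦ ?_⟩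
  simp [hq, FormalMultilinearSeries.partialSum]

end Polynomial

/-- The complete circled (complete Reinhardt) subsets of `𝕜^ι`: with a point `z` they contain the
whole closed polydisc of polyradius `‖z j‖` centred at `0`. Openness, connectedness and boundedness
are not part of the notion. -/
def IsCompleteCircled {ι 𝕜 : Type*} [Norm 𝕜] (G : Set (ι → 𝕜)) : Prop :=
  ∀ z ∈ G, ∀ w : ι → 𝕜, (∀ j, ‖w j‖ ≤ ‖z j‖) → w ∈ G

theorem IsCompleteCircled.smul_mem_of_mem_closure {ι 𝕜 : Type*} [Finite ι] [NormedField 𝕜]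
    {G : Set (ι → 𝕜)} (hG : IsCompleteCircled G) {z : ι → 𝕜} (hz : z ∈ closure G) {c : 𝕜}
    (hc : ‖c‖ < 1) : c • z ∈ G := by
  have hdom : ∀ᶠ w in 𝓝 z, ∀ j, ‖(c • z) j‖ ≤ ‖w j‖ := eventually_all.2 fun j ↦ by
    rcases eq_or_ne (z j) 0 with hj | hj
    · simp [hj]
    · have hlt : ‖(c • z) j‖ < ‖z j‖ := by
        simpa using mul_lt_of_lt_one_left (norm_pos_iff.2 hj) hc
      have hcont : ContinuousAt (fun w : ι → 𝕜 ↦ ‖w j‖) z := (continuous_apply j).norm.continuousAt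
      exact (hcont.eventually_const_lt hlt).mono fun _ ↦ le_of_lt
  obtain ⟨w, hwG, hw⟩ := ((mem_closure_iff_frequently.1 hz).and_eventually hdom).exists
  exact hG w hwG _ hw

theorem stmt_9_general {ι : Type*} [Finite ι] {G : Set (ι → ℂ)} (hopen : IsOpen G)
    (hbdd : Bornology.IsBounded G) (hG : ∀ z ∈ closure G, ∀ c : ℂ, ‖c‖ < 1 → c • z ∈ G)
    {f : (ι → ℂ) → ℂ} (hfc : ContinuousOn f (closure G)) (hfd : DifferentiableOn ℂ f G) {ε : ℝ}
    (hε : 0 < ε) :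
    ∃ p : MvPolynomial ι ℂ, ∀ z ∈ closure G, ‖f z - MvPolynomial.eval z p‖ ≤ ε := by
  have := Fintype.ofFinite ι
  obtain ⟨p, N, hp⟩ := exists_partialSum_norm_sub_le hopen hbdd hG hfc hfd hε
  obtain ⟨q, hq⟩ := exists_mvPolynomial_eval_eq_partialSum p N
  exact ⟨q, fun z hz ↦ (hq z).symm ▸ hp z hz⟩

/-- Polynomials are dense in `B(G)` for a bounded complete `n`-circled
domain `G`: every `f` continuous on `closure G` and holomorphic on `G` can be
approximated uniformly on `closure G` by (multivariate) polynomials. -/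
theorem stmt_9 (n : ℕ) (G : Set (Fin n → ℂ))
    (hop : IsOpen G) (hconn : IsConnected G) (hbd : Bornology.IsBounded G)
    (hne : G.Nonempty)
    (hcirc : ∀ z ∈ G, ∀ w : Fin n → ℂ, (∀ j, ‖w j‖ ≤ ‖z j‖) → w ∈ G)
    (f : (Fin n → ℂ) → ℂ)
    (hfc : ContinuousOn f (closure G)) (hfd : DifferentiableOn ℂ f G) :
    ∀ ε > (0 : ℝ), ∃ p : MvPolynomial (Fin n) ℂ,
      ∀ z ∈ closure G, ‖f z - MvPolynomial.eval z p‖ ≤ ε :=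
  fun _ ↦ stmt_9_general hop hbd
    (fun _ hz _ ↦ IsCompleteCircled.smul_mem_of_mem_closure hcirc hz) hfc hfd
end

section
/- Let G₁, G₂ ⊆ ℂⁿ be bounded complete n-circled domains, and suppose that for every k ∈ M there is ρ(k) ∈ (ℝ_{>0})ⁿ such that P(ρ(k)) ⊆ G₁ and |z^k| ≤ ρ(k)^k for every z ∈ G₁. Let A : ((Fin n → ℂ) → ℂ) →ₗ[ℂ] ((Fin n → ℂ) → ℂ) be a ℂ-linear map such that: (i) for every f holomorphic on G₁, A f is holomorphic on G₂; and (ii) for every t ∈ (0,1) there exist r ∈ (0,1) and C₀ > 0 such that ‖A f‖_{t•closure(G₂)} ≤ C₀ ‖f‖_{r•closure(G₁)} for every f holomorphic on G₁. Then for every t ∈ (0,1) there exist C > 0 and s ∈ (0,1) such that for every k ∈ M, every f : ℂⁿ → ℂ holomorphic on G₁, and every c : ℕⁿ → ℂ such that for all z ∈ G₁ the family (c_m · z^m)_{m ∈ ℕⁿ} is absolutely summable with sum f(z): ‖A(P_k^c f)‖_{t•closure(G₂)} ≤ C · sup_{z ∈ s•closure(P(ρ(k)))} |f(z)|, where P_k^c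 f : ℂⁿ → ℂ is the function z ↦ Σ'_{l ≥ 1} c_{l·k} · z^{l·k} (tsum, equal to 0 at points where the family is not summable). -/
open scoped Pointwise

/-!
Expand `f = ∑ c_m z^m`. Only the coefficients on the ray `ℕ k` enter `P_k f`, and Cauchy's estimate
on the torus of polyradius `s ρ`, `ρ = ρ(k)`, bounds each of them by `|c_m| (s ρ)^m ≤ ‖f‖`, the norm
being the supremum over `s • closure P(ρ)`. On `r • closure G` extremality of `ρ` gives
`|z^k| ≤ r^|k| ρ^k ≤ (r / s) (s ρ)^k`, so for `r < s` the series `P_k f` is dominated there by the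
geometric series `∑_{l ≥ 1} (r / s)^l ‖f‖ = r / (s - r) ‖f‖`, uniformly in `k`. As `P_k f` is
holomorphic on `G`, the operator bound applies to it.
-/

section FourierCoefficients

open MeasureTheory UnitAddTorus

theorem inner_eq_of_hasSum_smul_orthonormal {α 𝕜 E : Type*} [RCLike 𝕜] [NormedAddCommGroup E]
    [InnerProductSpace 𝕜 E] {v : α → E} (hv : Orthonormal 𝕜 v) {a : α → 𝕜} {x : E}
    (hx : HasSum (fun i => a i • v i) x) (i : α) : inner 𝕜 (v i) x = a i := by
  classical
  have hinner : HasSum (fun j => inner 𝕜 (v i) (a j • v j)) (inner 𝕜 (v i) x) :=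
    (innerSL 𝕜 (v i)).hasSum hx
  simp only [inner_smul_right, orthonormal_iff_ite.mp hv, mul_ite, mul_one, mul_zero] at hinner
  simpa only [if_true] using hinner.unique (hasSum_single i fun j hj => if_neg hj.symm)

/-- The normalized Haar measure, with respect to which `UnitAddTorus.orthonormal_mFourier` is
stated. -/
noncomputable local instance : MeasureSpace UnitAddCircle := ⟨AddCircle.haarAddCircle⟩

local instance : Measure.IsAddHaarMeasure (volume : Measure UnitAddCircle) :=
  inferInstanceAs (Measure.IsAddHaarMeasure AddCircle.haarAddCircle)

local instance : IsProbabilityMeasure (volume : Measure UnitAddCircle) :=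
  inferInstanceAs (IsProbabilityMeasure AddCircle.haarAddCircle)

theorem norm_coeff_le_of_hasSum_smul_mFourier {α d : Type*} [Fintype d] {e : α → d → ℤ}
    (he : Function.Injective e) {a : α → ℂ} {F : C(UnitAddTorus d, ℂ)}
    (hF : HasSum (fun i => a i • mFourier (e i)) F) (i : α) : ‖a i‖ ≤ ‖F‖ := by
  let T : C(UnitAddTorus d, ℂ) →L[ℂ] Lp ℂ 2 (volume : Measure (UnitAddTorus d)) :=
    ContinuousMap.toLp 2 volume ℂ
  have hT : ‖T‖ ≤ 1 := by
    simpa [measureUnivNNReal] using ContinuousMap.toLp_norm_le (α := UnitAddTorus d) (E := ℂ)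
      (p := 2) (μ := volume) (𝕜 := ℂ)
  have horth : Orthonormal ℂ fun i => T (mFourier (e i)) := orthonormal_mFourier.comp e he
  have hTF : HasSum (fun i => a i • T (mFourier (e i))) (T F) := by
    simpa only [map_smul] using T.hasSum hF
  calc ‖a i‖ = ‖inner ℂ (T (mFourier (e i))) (T F)‖ := by
        rw [inner_eq_of_hasSum_smul_orthonormal horth hTF i]
    _ ≤ ‖T (mFourier (e i))‖ * ‖T F‖ := norm_inner_le_norm _ _
    _ = ‖T F‖ := by rw [horth.norm_eq_one, one_mul]
    _ ≤ ‖F‖ := by simpa using T.le_of_opNorm_le hT F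

end FourierCoefficients

section Monomials

variable {ι : Type*} [Fintype ι]

theorem prod_pow_nsmul {M : Type*} [CommMonoid M] (z : ι → M) (k : ι → ℕ) (l : ℕ) :
    ∏ j, z j ^ (l • k) j = (∏ j, z j ^ k j) ^ l := by
  simp only [Pi.smul_apply, smul_eq_mul, mul_comm l, pow_mul, Finset.prod_pow]

theorem prod_mul_pow {M : Type*} [CommMonoid M] (a z : ι → M) (k : ι → ℕ) :
    ∏ j, (a j * z j) ^ k j = (∏ j, a j ^ k j) * ∏ j, z j ^ k j := by
  simp only [mul_pow, Finset.prod_mul_distrib]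

theorem prod_const_mul_pow {M : Type*} [CommMonoid M] (a : M) (z : ι → M) (k : ι → ℕ) :
    ∏ j, (a * z j) ^ k j = a ^ (∑ j, k j) * ∏ j, z j ^ k j := by
  rw [prod_mul_pow, Finset.prod_pow_eq_pow_sum]

theorem prod_pow_lt_prod_pow {x y : ι → ℝ} (hx : ∀ j, 0 ≤ x j) (hxy : ∀ j, x j < y j) {k : ι → ℕ}
    (hk : k ≠ 0) : ∏ j, x j ^ k j < ∏ j, y j ^ k j := by
  have hy (j : ι) : 0 < y j := (hx j).trans_lt (hxy j)
  by_cases hzero : ∃ j, x j ^ k j = 0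
  · obtain ⟨j, hj⟩ := hzero
    rw [Finset.prod_eq_zero (Finset.mem_univ j) hj]
    exact Finset.prod_pos fun j _ => pow_pos (hy j) _
  · push Not at hzero
    obtain ⟨j₀, hj₀⟩ := Function.ne_iff.mp hk
    exact Finset.prod_lt_prod (fun j _ => (pow_nonneg (hx j) _).lt_of_ne' (hzero j))
      (fun j _ => pow_le_pow_left₀ (hx j) (hxy j).le _)
      ⟨j₀, Finset.mem_univ _, pow_lt_pow_left₀ (hxy j₀) (hx j₀) hj₀⟩

end Monomials

section PowerSeries

variable {ι : Type*} [Fintype ι]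

open UnitAddTorus in
theorem norm_coeff_mul_prod_pow_le {r : ι → ℝ} (hr : ∀ j, 0 ≤ r j) {f : (ι → ℂ) → ℂ}
    {c : (ι → ℕ) → ℂ}
    (hf : ∀ z : ι → ℂ, (∀ j, ‖z j‖ = r j) → HasSum (fun m => c m * ∏ j, z j ^ m j) (f z))
    {B : ℝ} (hB : ∀ z : ι → ℂ, (∀ j, ‖z j‖ = r j) → ‖f z‖ ≤ B) (m : ι → ℕ) :
    ‖c m‖ * ∏ j, r j ^ m j ≤ B := by
  have hnorm (j : ι) : ‖(r j : ℂ)‖ = r j := by simp [hr j]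
  let a (m : ι → ℕ) : ℂ := c m * ∏ j, (r j : ℂ) ^ m j
  let e (m : ι → ℕ) (j : ι) : ℤ := m j
  have he : Function.Injective e := fun m m' h => funext fun j => Int.ofNat_inj.mp (congrFun h j)
  have hsum : HasSum (fun m => a m • mFourier (e m)) (∑' m, a m • mFourier (e m)) := by
    refine (Summable.of_norm ?_).hasSum
    simpa only [norm_smul, mFourier_norm, mul_one] using (hf _ hnorm).summable.norm
  have hF : ‖∑' m, a m • mFourier (e m)‖ ≤ B := by
    have hB₀ : 0 ≤ B := (norm_nonneg _).trans (hB _ hnorm)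
    refine (ContinuousMap.norm_le _ hB₀).mpr fun x => ?_
    let z (j : ι) : ℂ := r j * AddCircle.toCircle (x j)
    have hz (j : ι) : ‖z j‖ = r j := by rw [norm_mul, hnorm, Circle.norm_coe, mul_one]
    have heval := (ContinuousMap.evalCLM ℂ x).hasSum hsum
    have hterm (m : ι → ℕ) :
        ContinuousMap.evalCLM ℂ x (a m • mFourier (e m)) = c m * ∏ j, z j ^ m j := by
      simp [a, e, z, prod_mul_pow, mFourier, fourier_apply, AddCircle.toCircle_nsmul, mul_assoc]
    have hval : (∑' m, a m • mFourier (e m)) x = f z :=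
      heval.unique ((hf z hz).congr_fun hterm)
    exact hval ▸ hB z hz
  calc ‖c m‖ * ∏ j, r j ^ m j = ‖a m‖ := by simp only [a, norm_mul, norm_prod, norm_pow, hnorm]
    _ ≤ _ := norm_coeff_le_of_hasSum_smul_mFourier he hsum m
    _ ≤ B := hF

theorem norm_le_tsum_of_norm_le {r z : ι → ℂ} (hzr : ∀ j, ‖z j‖ ≤ ‖r j‖) {c : (ι → ℕ) → ℂ}
    {v : ℂ} (hz : HasSum (fun m => c m * ∏ j, z j ^ m j) v)
    (hr : Summable fun m => c m * ∏ j, r j ^ m j) :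
    ‖v‖ ≤ ∑' m, ‖c m * ∏ j, r j ^ m j‖ := by
  rw [← hz.tsum_eq]
  refine tsum_of_norm_bounded hr.norm.hasSum fun m => ?_
  simp only [norm_mul, norm_prod, norm_pow]
  gcongr
  exact hzr _

theorem differentiableAt_tsum_mul_pow {α : Type*} {a : α → ℂ} {e : α → ℕ} {ζ₀ ζ : ℂ}
    (hsum : Summable fun i => ‖a i * ζ₀ ^ e i‖) (hζ : ‖ζ‖ < ‖ζ₀‖) :
    DifferentiableAt ℂ (fun ζ => ∑' i, a i * ζ ^ e i) ζ := by
  have hball : DifferentiableOn ℂ (fun ζ => ∑' i, a i * ζ ^ e i) (Metric.ball 0 ‖ζ₀‖) := by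
    refine Complex.differentiableOn_tsum_of_summable_norm hsum (fun i => by fun_prop)
      Metric.isOpen_ball fun i ξ hξ => ?_
    rw [norm_mul, norm_mul, norm_pow, norm_pow]
    gcongr
    exact (mem_ball_zero_iff.mp hξ).le
  exact hball.differentiableAt (Metric.isOpen_ball.mem_nhds (mem_ball_zero_iff.mpr hζ))

end PowerSeries

section Domains

variable {ι : Type*}

/-- The open polydisc `P(ρ)` centred at the origin with polyradius `ρ`. -/
def polydisc (ρ : ι → ℝ) : Set (ι → ℂ) := {z | ∀ j, ‖z j‖ < ρ j}

theorem closure_polydisc {ρ : ι → ℝ} (hρ : ∀ j, 0 < ρ j) :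
    closure (polydisc ρ) = {z | ∀ j, ‖z j‖ ≤ ρ j} := by
  have hpi : polydisc ρ = Set.univ.pi fun j => Metric.ball 0 (ρ j) := by ext; simp [polydisc]
  ext z
  simp [hpi, closure_pi_set, closure_ball _ (hρ _).ne']

theorem mem_smul_closure_polydisc {ρ : ι → ℝ} (hρ : ∀ j, 0 < ρ j) {s : ℝ} (hs : 0 < s)
    {z : ι → ℂ} : z ∈ s • closure (polydisc ρ) ↔ ∀ j, ‖z j‖ ≤ s * ρ j := by
  simp [closure_polydisc hρ, Set.mem_smul_set_iff_inv_smul_mem₀ hs.ne', abs_of_pos hs,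
    inv_mul_le_iff₀ hs]

/-- Complete `n`-circled sets (complete Reinhardt sets): membership passes from `z` to every point
whose coordinates have at most the moduli of those of `z`. -/
def IsCompleteReinhardt (G : Set (ι → ℂ)) : Prop :=
  ∀ z ∈ G, ∀ w : ι → ℂ, (∀ j, ‖w j‖ ≤ ‖z j‖) → w ∈ G

theorem IsCompleteReinhardt.exists_forall_norm_lt [Finite ι] {G : Set (ι → ℂ)} (hG : IsOpen G)
    (hcirc : IsCompleteReinhardt G) {w : ι → ℂ} (hw : w ∈ G) : ∃ w' ∈ G, ∀ j, ‖w j‖ < ‖w' j‖ := by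
  let u (ε : ℝ) (j : ι) : ℂ := (‖w j‖ + ε : ℝ)
  have hu₀ : u 0 ∈ G := hcirc w hw _ fun j => by simp [u]
  have hu : Continuous u := by fun_prop
  obtain ⟨ε, hεG, hε⟩ := ((hu.continuousAt.eventually (hG.mem_nhds hu₀)).filter_mono
    nhdsWithin_le_nhds |>.and (self_mem_nhdsWithin (s := Set.Ioi 0))).exists
  have hε : 0 < ε := hε
  refine ⟨u ε, hεG, fun j => ?_⟩
  rw [Complex.norm_real, Real.norm_of_nonneg (by positivity)]
  exact lt_add_of_pos_right _ hε

end Domains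

section CauchyEstimate

variable {ι : Type*} [Fintype ι] {ρ : ι → ℝ} {s : ℝ} {f : (ι → ℂ) → ℂ} {c : (ι → ℕ) → ℂ}

theorem norm_le_biSup_smul_closure_polydisc (hρ : ∀ j, 0 < ρ j) (hs : s ∈ Set.Ioo 0 1)
    (hf : ∀ z ∈ polydisc ρ, HasSum (fun m => c m * ∏ j, z j ^ m j) (f z)) {z : ι → ℂ}
    (hz : z ∈ s • closure (polydisc ρ)) : ‖f z‖ ≤ ⨆ z ∈ s • closure (polydisc ρ), ‖f z‖ := by
  let p (j : ι) : ℂ := (s * ρ j : ℝ)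
  have hp (j : ι) : ‖p j‖ = s * ρ j := by
    rw [Complex.norm_real, Real.norm_of_nonneg (mul_pos hs.1 (hρ j)).le]
  have hsρ (j : ι) : s * ρ j < ρ j := mul_lt_of_lt_one_left (hρ j) hs.2
  have hpf := hf p fun j => (hp j).trans_lt (hsρ j)
  refine le_ciSup₂ (f := fun z (_ : z ∈ s • closure (polydisc ρ)) => ‖f z‖)
    ⟨∑' m, ‖c m * ∏ j, p j ^ m j‖, ?_⟩ z hz
  simp only [mem_upperBounds, Set.mem_iUnion, Set.mem_range, mem_smul_closure_polydisc hρ hs.1]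
  rintro _ ⟨w, hw, rfl⟩
  exact norm_le_tsum_of_norm_le (fun j => (hw j).trans_eq (hp j).symm)
    (hf w fun j => (hw j).trans_lt (hsρ j)) hpf.summable

theorem norm_coeff_mul_prod_pow_le_biSup (hρ : ∀ j, 0 < ρ j) (hs : s ∈ Set.Ioo 0 1)
    (hf : ∀ z ∈ polydisc ρ, HasSum (fun m => c m * ∏ j, z j ^ m j) (f z)) (m : ι → ℕ) :
    ‖c m‖ * ∏ j, (s * ρ j) ^ m j ≤ ⨆ z ∈ s • closure (polydisc ρ), ‖f z‖ := by
  refine norm_coeff_mul_prod_pow_le (fun j => (mul_pos hs.1 (hρ j)).le)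
    (fun z hz => hf z fun j => ?_) (fun z hz => ?_) m
  · exact (hz j).trans_lt (mul_lt_of_lt_one_left (hρ j) hs.2)
  · exact norm_le_biSup_smul_closure_polydisc hρ hs hf
      ((mem_smul_closure_polydisc hρ hs.1).mpr fun j => (hz j).le)

end CauchyEstimate

section RayPart

variable {ι : Type*} [Fintype ι]

/-- The function `P_k f : z ↦ ∑_{l ≥ 1} c_{l k} z^{l k}`, given the coefficients `c` of `f`. The sum
over `l ≥ 1` is indexed by `l - 1`. -/
noncomputable def rayPart (k : ι → ℕ) (c : (ι → ℕ) → ℂ) (z : ι → ℂ) : ℂ :=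
  ∑' l : ℕ, c ((l + 1) • k) * ∏ j, z j ^ ((l + 1) • k) j

theorem rayPart_eq_tsum_pow (k : ι → ℕ) (c : (ι → ℕ) → ℂ) (z : ι → ℂ) :
    rayPart k c z = ∑' l : ℕ, c ((l + 1) • k) * (∏ j, z j ^ k j) ^ (l + 1) := by
  simp only [rayPart, prod_pow_nsmul]

theorem differentiableOn_rayPart {G : Set (ι → ℂ)} (hG : IsOpen G) (hcirc : IsCompleteReinhardt G)
    {c : (ι → ℕ) → ℂ} (hc : ∀ z ∈ G, Summable fun m => c m * ∏ j, z j ^ m j) {k : ι → ℕ}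
    (hk : k ≠ 0) : DifferentiableOn ℂ (rayPart k c) G := by
  intro w hw
  obtain ⟨w', hw', hlt⟩ := hcirc.exists_forall_norm_lt hG hw
  have hmonomial : ‖∏ j, w j ^ k j‖ < ‖∏ j, w' j ^ k j‖ := by
    simpa only [norm_prod, norm_pow] using
      prod_pow_lt_prod_pow (fun j => norm_nonneg (w j)) hlt hk
  have hinj : Function.Injective fun l : ℕ => (l + 1) • k := by
    obtain ⟨j₀, hj₀⟩ := Function.ne_iff.mp hk
    exact fun l l' h => Nat.succ_injective (Nat.eq_of_mul_eq_mul_right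
      (Nat.pos_of_ne_zero hj₀) (congrFun h j₀))
  have hsum : Summable fun l : ℕ => ‖c ((l + 1) • k) * (∏ j, w' j ^ k j) ^ (l + 1)‖ := by
    simpa only [Function.comp_def, prod_pow_nsmul] using (hc w' hw').norm.comp_injective hinj
  have hcomp : rayPart k c =
      (fun ζ => ∑' l : ℕ, c ((l + 1) • k) * ζ ^ (l + 1)) ∘ fun z => ∏ j, z j ^ k j :=
    funext (rayPart_eq_tsum_pow k c)
  rw [hcomp]
  exact ((differentiableAt_tsum_mul_pow hsum hmonomial).comp w
    (by fun_prop)).differentiableWithinAt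

theorem norm_prod_smul_pow_le {ρ : ι → ℝ} {r s : ℝ} (hr : 0 ≤ r) (hrs : r < s) {k : ι → ℕ}
    (hk : k ≠ 0) {w : ι → ℂ} (hw : ‖∏ j, w j ^ k j‖ ≤ ∏ j, ρ j ^ k j) :
    ‖∏ j, (r • w) j ^ k j‖ ≤ r / s * ∏ j, (s * ρ j) ^ k j := by
  have hs : 0 < s := hr.trans_lt hrs
  have hdeg : ∑ j, k j ≠ 0 := by simpa [Finset.sum_eq_zero_iff, funext_iff] using hk
  have hpow : (r / s) ^ (∑ j, k j) ≤ r / s :=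
    pow_le_of_le_one (by positivity) ((div_le_one hs).mpr hrs.le) hdeg
  have hρ : 0 ≤ ∏ j, ρ j ^ k j := (norm_nonneg _).trans hw
  calc ‖∏ j, (r • w) j ^ k j‖ = r ^ (∑ j, k j) * ‖∏ j, w j ^ k j‖ := by
        simp only [Pi.smul_apply, Complex.real_smul, prod_const_mul_pow, norm_mul, norm_pow,
          Complex.norm_real, Real.norm_of_nonneg hr]
    _ ≤ r ^ (∑ j, k j) * ∏ j, ρ j ^ k j := by gcongr
    _ = (r / s) ^ (∑ j, k j) * (s ^ (∑ j, k j) * ∏ j, ρ j ^ k j) := by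
        rw [div_pow]; field_simp
    _ ≤ r / s * (s ^ (∑ j, k j) * ∏ j, ρ j ^ k j) := by gcongr
    _ = r / s * ∏ j, (s * ρ j) ^ k j := by rw [prod_const_mul_pow]

theorem norm_rayPart_le_of_norm_coeff_le {R : ι → ℝ} {q B : ℝ} (hq₀ : 0 ≤ q) (hq₁ : q < 1)
    {c : (ι → ℕ) → ℂ} (hc : ∀ m, ‖c m‖ * ∏ j, R j ^ m j ≤ B) {k : ι → ℕ} {z : ι → ℂ}
    (hz : ‖∏ j, z j ^ k j‖ ≤ q * ∏ j, R j ^ k j) : ‖rayPart k c z‖ ≤ q / (1 - q) * B := by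
  have hgeom : HasSum (fun l : ℕ => q ^ (l + 1) * B) (q / (1 - q) * B) := by
    simpa only [pow_succ', div_eq_mul_inv] using
      ((hasSum_geometric_of_lt_one hq₀ hq₁).mul_left q).mul_right B
  rw [rayPart_eq_tsum_pow]
  refine tsum_of_norm_bounded hgeom fun l => ?_
  calc ‖c ((l + 1) • k) * (∏ j, z j ^ k j) ^ (l + 1)‖
      ≤ ‖c ((l + 1) • k)‖ * (q * ∏ j, R j ^ k j) ^ (l + 1) := by
        rw [norm_mul, norm_pow]; gcongr
    _ = q ^ (l + 1) * (‖c ((l + 1) • k)‖ * ∏ j, R j ^ ((l + 1) • k) j) := by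
        rw [prod_pow_nsmul, mul_pow]; ring
    _ ≤ q ^ (l + 1) * B := by gcongr; exact hc _

theorem norm_rayPart_le_biSup {G : Set (ι → ℂ)} {ρ : ι → ℝ} (hρ : ∀ j, 0 < ρ j) {k : ι → ℕ}
    (hk : k ≠ 0) (hext : ∀ z ∈ G, ‖∏ j, z j ^ k j‖ ≤ ∏ j, ρ j ^ k j) {r s : ℝ} (hr : 0 ≤ r)
    (hrs : r < s) (hs : s < 1) {f : (ι → ℂ) → ℂ} {c : (ι → ℕ) → ℂ}
    (hf : ∀ z ∈ polydisc ρ, HasSum (fun m => c m * ∏ j, z j ^ m j) (f z)) {z : ι → ℂ}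
    (hz : z ∈ r • closure G) :
    ‖rayPart k c z‖ ≤ r / (s - r) * ⨆ z ∈ s • closure (polydisc ρ), ‖f z‖ := by
  have hs₀ : 0 < s := hr.trans_lt hrs
  have hclosed : IsClosed {w : ι → ℂ | ‖∏ j, w j ^ k j‖ ≤ ∏ j, ρ j ^ k j} :=
    isClosed_le (by fun_prop) continuous_const
  obtain ⟨w, hw, rfl⟩ := hz
  have hquot : r / (s - r) = r / s / (1 - r / s) := by
    have : s - r ≠ 0 := (sub_pos.mpr hrs).ne'
    field_simp
  rw [hquot]
  exact norm_rayPart_le_of_norm_coeff_le (by positivity) ((div_lt_one hs₀).mpr hrs)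
    (norm_coeff_mul_prod_pow_le_biSup hρ ⟨hs₀, hs⟩ hf)
    (norm_prod_smul_pow_le hr hrs hk (closure_minimal hext hclosed hw))

end RayPart

theorem stmt_15_general {ι : Type*} [Fintype ι] {G : Set (ι → ℂ)} (hG : IsOpen G)
    (hcirc : IsCompleteReinhardt G) {r : ℝ} (hr : r ∈ Set.Ioo 0 1) {C₀ : ℝ} (hC₀ : 0 < C₀)
    {Φ : ((ι → ℂ) → ℂ) → ℝ}
    (hΦ : ∀ f, DifferentiableOn ℂ f G → BddAbove ((fun z => ‖f z‖) '' (r • closure G)) →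
      Φ f ≤ C₀ * ⨆ z ∈ r • closure G, ‖f z‖) :
    ∃ C > (0 : ℝ), ∃ s ∈ Set.Ioo (0 : ℝ) 1, ∀ k : ι → ℕ, k ≠ 0 → ∀ ρ : ι → ℝ, (∀ j, 0 < ρ j) →
      polydisc ρ ⊆ G → (∀ z ∈ G, ‖∏ j, z j ^ k j‖ ≤ ∏ j, ρ j ^ k j) →
      ∀ (f : (ι → ℂ) → ℂ) (c : (ι → ℕ) → ℂ),
        (∀ z ∈ G, HasSum (fun m => c m * ∏ j, z j ^ m j) (f z)) →
        Φ (rayPart k c) ≤ C * ⨆ z ∈ s • closure (polydisc ρ), ‖f z‖ := by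
  obtain ⟨s, hrs, hs⟩ := exists_between hr.2
  have hfactor : 0 < r / (s - r) := div_pos hr.1 (sub_pos.mpr hrs)
  refine ⟨C₀ * (r / (s - r)), mul_pos hC₀ hfactor, s, ⟨hr.1.trans hrs, hs⟩, ?_⟩
  intro k hk ρ hρ hρG hext f c hf
  have hbound : ∀ z ∈ r • closure G,
      ‖rayPart k c z‖ ≤ r / (s - r) * ⨆ z ∈ s • closure (polydisc ρ), ‖f z‖ := fun z hz =>
    norm_rayPart_le_biSup hρ hk hext hr.1.le hrs hs (fun z hz => hf z (hρG hz)) hz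
  have hnonneg : 0 ≤ r / (s - r) * ⨆ z ∈ s • closure (polydisc ρ), ‖f z‖ :=
    mul_nonneg hfactor.le (Real.iSup_nonneg fun z => Real.iSup_nonneg fun _ => norm_nonneg _)
  calc Φ (rayPart k c) ≤ C₀ * ⨆ z ∈ r • closure G, ‖rayPart k c z‖ :=
        hΦ _ (differentiableOn_rayPart hG hcirc (fun z hz => (hf z hz).summable) hk)
          ⟨_, Set.forall_mem_image.mpr hbound⟩
    _ ≤ C₀ * (r / (s - r) * ⨆ z ∈ s • closure (polydisc ρ), ‖f z‖) := by
        gcongr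
        exact Real.iSup_le (fun z => Real.iSup_le (hbound z) hnonneg) hnonneg
    _ = _ := (mul_assoc _ _ _).symm

/-- Theorem 4.8: uniform estimates for `A ∘ P_k`. If `A` is a bounded
operator from `H(G₁)` to `H(G₂)` (bounded complete `n`-circled domains), then for every
`t ∈ (0,1)` there are `C > 0` and `s ∈ (0,1)` such that for all `k ∈ M` and all `f`
holomorphic on `G₁` with monomial expansion `c`,
`‖A(P_k f)‖_{t•cl G₂} ≤ C · ‖f‖_{s•cl P(ρ(k))}`, where
`P_k f(z) = Σ'_{l≥1} c_{l·k} z^{l·k}`. -/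
theorem stmt_15 (n : ℕ) (G1 G2 : Set (Fin n → ℂ))
    (hop1 : IsOpen G1) (hconn1 : IsConnected G1) (hbd1 : Bornology.IsBounded G1)
    (hne1 : G1.Nonempty)
    (hcirc1 : ∀ z ∈ G1, ∀ w : Fin n → ℂ, (∀ j, ‖w j‖ ≤ ‖z j‖) → w ∈ G1)
    (hop2 : IsOpen G2) (hconn2 : IsConnected G2) (hbd2 : Bornology.IsBounded G2)
    (hne2 : G2.Nonempty)
    (hcirc2 : ∀ z ∈ G2, ∀ w : Fin n → ℂ, (∀ j, ‖w j‖ ≤ ‖z j‖) → w ∈ G2)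
    (ρ : (Fin n → ℕ) → Fin n → ℝ)
    (hρ : ∀ k : Fin n → ℕ, k ≠ 0 → Finset.univ.gcd k = 1 →
      (∀ j, 0 < ρ k j) ∧ {z : Fin n → ℂ | ∀ j, ‖z j‖ < ρ k j} ⊆ G1 ∧
        ∀ z ∈ G1, ‖∏ j, z j ^ k j‖ ≤ ∏ j, ρ k j ^ k j)
    (A : ((Fin n → ℂ) → ℂ) →ₗ[ℂ] ((Fin n → ℂ) → ℂ))
    (hA1 : ∀ f : (Fin n → ℂ) → ℂ,
      DifferentiableOn ℂ f G1 → DifferentiableOn ℂ (A f) G2)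
    (hA2 : ∀ t ∈ Set.Ioo (0 : ℝ) 1, ∃ r ∈ Set.Ioo (0 : ℝ) 1, ∃ C0 > (0 : ℝ),
      ∀ f : (Fin n → ℂ) → ℂ, DifferentiableOn ℂ f G1 →
        (⨆ z ∈ t • closure G2, ‖A f z‖) ≤ C0 * ⨆ z ∈ r • closure G1, ‖f z‖) :
    ∀ t ∈ Set.Ioo (0 : ℝ) 1, ∃ C > (0 : ℝ), ∃ s ∈ Set.Ioo (0 : ℝ) 1,
      ∀ k : Fin n → ℕ, k ≠ 0 → Finset.univ.gcd k = 1 →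
      ∀ f : (Fin n → ℂ) → ℂ, DifferentiableOn ℂ f G1 →
      ∀ c : (Fin n → ℕ) → ℂ,
        (∀ z ∈ G1,
          Summable (fun m : Fin n → ℕ => ‖c m * ∏ j, z j ^ m j‖) ∧
          HasSum (fun m : Fin n → ℕ => c m * ∏ j, z j ^ m j) (f z)) →
        (⨆ z ∈ t • closure G2,
            ‖A (fun w => ∑' l : ℕ,
                c (fun j => (l + 1) * k j) * ∏ j, w j ^ ((l + 1) * k j)) z‖) ≤
          C * ⨆ z ∈ s • closure {z : Fin n → ℂ | ∀ j, ‖z j‖ < ρ k j}, ‖f z‖ := by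
  intro t ht
  obtain ⟨r, hr, C₀, hC₀, hA⟩ := hA2 t ht
  obtain ⟨C, hC, s, hs, hle⟩ := stmt_15_general hop1 hcirc1 hr hC₀
    (Φ := fun f => ⨆ z ∈ t • closure G2, ‖A f z‖) fun f hf _ => hA f hf
  refine ⟨C, hC, s, hs, fun k hk hgcd f _ c hc => ?_⟩
  obtain ⟨hρ₀, hρG, hext⟩ := hρ k hk hgcd
  exact hle k hk (ρ k) hρ₀ hρG hext f c fun z hz => (hc z hz).2
end
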